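/- Let d ∈ ℕ, let X be an S_d-valued random vector whose density f is bounded on S_d, and let s ∈ Int(S_d). Then, as b → 0, Var{κ_{s,b}(X)} ≤ E{κ_{s,b}²(X)} ≪_s b^{−d/2}, where the implied constant may depend on s, d, and ‖f‖_∞. -/

import Mathlib

open MeasureTheory Filter Asymptotics Real Topology

noncomputable section

/-- The `d`-dimensional simplex `S_d = {s ∈ [0,1]^d : ‖s‖₁ ≤ 1}`. -/
def Sd (d : ℕ) : Set (Fin d → ℝ) :=
  {s | (∀ i, s i ∈ Set.Icc (0 : ℝ) 1) ∧ ∑ i, |s i| ≤ 1}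

/-- The interior of the simplex, `Int(S_d) = {s ∈ (0,1)^d : ‖s‖₁ < 1}`. -/
def SdInt (d : ℕ) : Set (Fin d → ℝ) :=
  {s | (∀ i, s i ∈ Set.Ioo (0 : ℝ) 1) ∧ ∑ i, |s i| < 1}

/-- The Dirichlet(u, v) density on the simplex, evaluated at `x`. -/
def dirK (d : ℕ) (u : Fin d → ℝ) (v : ℝ) (x : Fin d → ℝ) : ℝ :=
  (Real.Gamma (∑ i, u i + v) / (Real.Gamma v * ∏ i, Real.Gamma (u i))) *
    (1 - ∑ i, x i) ^ (v - 1) * ∏ i, (x i) ^ (u i - 1)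

/-- The Dirichlet kernel `κ_{s,b} = K_{s/b+1, (1-‖s‖₁)/b+1}`. -/
def kappa (d : ℕ) (s : Fin d → ℝ) (b : ℝ) (x : Fin d → ℝ) : ℝ :=
  dirK d (fun i => s i / b + 1) ((1 - ∑ i, s i) / b + 1) x

/-- `ψ(s) = (4π)^{-d/2} / ((1-‖s‖₁)^{1/2} ∏ s_i^{1/2})`. -/
def psiFun (d : ℕ) (s : Fin d → ℝ) : ℝ :=
  (4 * π) ^ (-(d : ℝ) / 2) /
    ((1 - ∑ i, s i) ^ ((1 : ℝ) / 2) * ∏ i, (s i) ^ ((1 : ℝ) / 2))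

/-- The Dirichlet kernel density estimator `f̂_{n,b}(s)`. -/
def fhat {Ω : Type*} (d n : ℕ) (b : ℝ) (X : ℕ → Ω → (Fin d → ℝ))
    (s : Fin d → ℝ) (ω : Ω) : ℝ :=
  (n : ℝ)⁻¹ * ∑ i ∈ Finset.Icc 1 n, kappa d s b (X i ω)

/-- The strong mixing (α-mixing) coefficient of the sequence `X`. -/
def alphaMix {Ω : Type*} [MeasurableSpace Ω] (P : Measure Ω)
    {d : ℕ} (X : ℕ → Ω → (Fin d → ℝ)) (m : ℕ) : ℝ :=
  sSup {r : ℝ | ∃ k : ℕ, 1 ≤ k ∧ ∃ A B : Set Ω,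
    MeasurableSet[⨆ i ∈ Set.Icc 1 k, MeasurableSpace.comap (X i) inferInstance] A ∧
    MeasurableSet[⨆ i ∈ Set.Ici (k + m), MeasurableSpace.comap (X i) inferInstance] B ∧
    r = |(P (A ∩ B)).toReal - (P A).toReal * (P B).toReal|}

/-- Strict stationarity of the sequence `X` (indexed from 1). -/
def IsStrictlyStationary {Ω : Type*} [MeasurableSpace Ω] (P : Measure Ω)
    {d : ℕ} (X : ℕ → Ω → (Fin d → ℝ)) : Prop :=
  ∀ k n : ℕ,
    Measure.map (fun ω => fun t : Fin n => X (t.1 + 1 + k) ω) P =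
      Measure.map (fun ω => fun t : Fin n => X (t.1 + 1) ω) P

/-- Covariance of two real random variables. -/
def cov {Ω : Type*} [MeasurableSpace Ω] (P : Measure Ω) (Y Z : Ω → ℝ) : ℝ :=
  ∫ ω, Y ω * Z ω ∂P - (∫ ω, Y ω ∂P) * (∫ ω, Z ω ∂P)

/-- The bias functional `g(s)` from Theorem MSE. -/
def gfun (d : ℕ) (f : (Fin d → ℝ) → ℝ) (s : Fin d → ℝ) : ℝ :=
  (∑ i, (1 - ((d : ℝ) + 1) * s i) * fderiv ℝ f s (Pi.single i 1)) +
    (1 / 2) * ∑ i, ∑ j, s i * ((if i = j then (1 : ℝ) else 0) - s j) *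
      fderiv ℝ (fun t => fderiv ℝ f t (Pi.single i 1)) s (Pi.single j 1)

/-- The centered kernel variable `Ξ_{i,n}(s)`. -/
def Xi {Ω : Type*} [MeasurableSpace Ω] (P : Measure Ω) {d : ℕ}
    (X : ℕ → Ω → (Fin d → ℝ)) (s : Fin d → ℝ) (b : ℝ) (i : ℕ) (ω : Ω) : ℝ :=
  kappa d s b (X i ω) - ∫ ω', kappa d s b (X i ω') ∂P

/-- The `j`-th big block of indices `I_j`. -/
def bigBlock (pn qn j : ℕ) : Finset ℕ :=
  Finset.Icc ((j - 1) * (pn + qn) + 1) ((j - 1) * (pn + qn) + pn)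

/-- The `j`-th small block of indices `J_j`. -/
def smallBlock (pn qn j : ℕ) : Finset ℕ :=
  Finset.Icc ((j - 1) * (pn + qn) + pn + 1) (j * (pn + qn))

/-- Assumption (A2): pairwise joint densities exist and the local dependence
functions `h_{i,j} = f_{X_i,X_j} - f_{X_i} f_{X_j}` have uniformly bounded `L^p` norms. -/
def AssumpA2 {Ω : Type*} [MeasurableSpace Ω] (P : Measure Ω) {d : ℕ}
    (X : ℕ → Ω → (Fin d → ℝ)) (f : (Fin d → ℝ) → ℝ) (p : ℝ) : Prop :=
  ∃ fpair : ℕ → ℕ → ((Fin d → ℝ) × (Fin d → ℝ)) → ℝ,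
    (∀ i j : ℕ, 1 ≤ i → 1 ≤ j → i ≠ j →
      Measure.map (fun ω => (X i ω, X j ω)) P =
        volume.withDensity (fun z => ENNReal.ofReal (fpair i j z))) ∧
    (∀ i j : ℕ, 1 ≤ i → 1 ≤ j → i ≠ j →
      Integrable (fun z => |fpair i j z - f z.1 * f z.2| ^ p)
        (volume.restrict (Sd d ×ˢ Sd d))) ∧
    ∃ C : ℝ, ∀ i j : ℕ, 1 ≤ i → 1 ≤ j → i ≠ j →
      (∫ z in Sd d ×ˢ Sd d, |fpair i j z - f z.1 * f z.2| ^ p) ^ (1 / p) ≤ C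

/-- Stirling ratio `R(z) = √(2π) e^{-z} z^{z+1/2} / Γ(z+1)`. -/
def Rfun (z : ℝ) : ℝ :=
  Real.sqrt (2 * π) * Real.exp (-z) * z ^ (z + 1 / 2) / Real.Gamma (z + 1)

end

/-!
By `log y ≤ y - 1` at `y = √(x / s)`, the function `x ^ s * exp (-x)` lies below a Gaussian in `√x`
centred at its maximum `x = s`. Multiplied over the `d + 1` barycentric coordinates, this gives
`κ_{s,b}(x) ≤ κ_{s,b}(s) * exp (-∑ i, (x i - s i) ^ 2 / (4 * b))` on the simplex, so a bounded
density yields `E κ_{s,b}(X) ^ 2 = O(b ^ (d / 2)) * κ_{s,b}(s) ^ 2`. The same Gaussian bound under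
the integral `Γ(y + 1 / 2) = 2 * ∫ w > 0, w ^ (2 * y) * exp (-w ^ 2)` is the upper half of
Stirling's formula; the lower half comes from integrating over `[z, z + √z]` only. Together they
give `κ_{s,b}(s) = O(b ^ (-d / 2))`.
-/

theorem rpow_mul_exp_neg_le {s x : ℝ} (hs : 0 ≤ s) (hx : 0 ≤ x) :
    x ^ s * exp (-x) ≤ s ^ s * exp (-s) * exp (-(√x - √s) ^ 2) := by
  rcases hs.eq_or_lt with rfl | hs
  · simp [sq_sqrt hx]
  rcases hx.eq_or_lt with rfl | hx
  · rw [zero_rpow hs.ne', zero_mul]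
    positivity
  have hlog : s * (log x - log s) ≤ 2 * (√x * √s) - 2 * s := by
    have hsqrt : log √x - log √s ≤ √x / √s - 1 := by
      rw [← log_div (by positivity) (by positivity)]
      exact log_le_sub_one_of_pos (by positivity)
    have hmul : s * (√x / √s) = √x * √s := by
      rw [mul_div_left_comm, div_sqrt]
    rw [log_sqrt hx.le, log_sqrt hs.le] at hsqrt
    linarith [mul_le_mul_of_nonneg_left hsqrt hs.le]
  rw [rpow_def_of_pos hx, rpow_def_of_pos hs, ← exp_add, ← exp_add, ← exp_add, exp_le_exp]
  linarith [sub_sq √x √s, sq_sqrt hx.le, sq_sqrt hs.le]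

theorem Gamma_add_half_le {y : ℝ} (hy : 0 < y) :
    Real.Gamma (y + 1 / 2) ≤ 2 * √π * (y ^ y * exp (-y)) := by
  have hGamma : ∫ w in Set.Ioi (0 : ℝ), w ^ (2 * y) * exp (-w ^ (2 : ℝ)) =
      1 / 2 * Real.Gamma (y + 1 / 2) := by
    rw [integral_rpow_mul_exp_neg_rpow two_pos (by linarith)]
    ring_nf
  have hint : Integrable fun w : ℝ => y ^ y * exp (-y) * exp (-(w - √y) ^ 2) := by
    simpa using ((integrable_exp_neg_mul_sq one_pos).comp_sub_right √y).const_mul (y ^ y * exp (-y))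
  have hgauss : ∫ w : ℝ, exp (-(w - √y) ^ 2) = √π := by
    rw [integral_sub_right_eq_self (fun w : ℝ => exp (-w ^ 2)) √y]
    simpa using integral_gaussian 1
  have hle : ∫ w in Set.Ioi (0 : ℝ), w ^ (2 * y) * exp (-w ^ (2 : ℝ)) ≤ y ^ y * exp (-y) * √π :=
    calc ∫ w in Set.Ioi (0 : ℝ), w ^ (2 * y) * exp (-w ^ (2 : ℝ))
        ≤ ∫ w in Set.Ioi (0 : ℝ), y ^ y * exp (-y) * exp (-(w - √y) ^ 2) := by
          refine setIntegral_mono_on (integrableOn_rpow_mul_exp_neg_rpow (by linarith) two_pos)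
            hint.integrableOn measurableSet_Ioi fun w (hw : 0 < w) => ?_
          rw [rpow_mul hw.le, rpow_two]
          simpa [sqrt_sq hw.le] using rpow_mul_exp_neg_le hy.le (sq_nonneg w)
      _ ≤ ∫ w : ℝ, y ^ y * exp (-y) * exp (-(w - √y) ^ 2) :=
          setIntegral_le_integral hint (ae_of_all _ fun w => by positivity)
      _ = y ^ y * exp (-y) * √π := by rw [integral_const_mul, hgauss]
  linarith

theorem le_rpow_mul_exp_neg {z t : ℝ} (hz : 0 < z) (ht : t ∈ Set.Icc z (z + √z)) :
    exp (-1 / 2) * (z ^ z * exp (-z)) ≤ t ^ z * exp (-t) := by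
  obtain ⟨v, hv, rfl⟩ : ∃ v, 0 ≤ v ∧ t = z * (1 + v) :=
    ⟨t / z - 1, by rw [sub_nonneg, one_le_div hz]; exact ht.1, by field_simp; ring⟩
  have hvz : z * v ^ 2 ≤ 1 := by
    have hvz : (z * v) ^ 2 ≤ z :=
      (sq_le (by positivity)).2 ⟨by have := sqrt_nonneg z; nlinarith, by linarith [ht.2]⟩
    nlinarith
  have hlog : v - v ^ 2 / 2 ≤ log (1 + v) := by
    refine le_trans ?_ (le_log_one_add_of_nonneg hv)
    rw [le_div_iff₀ (by positivity)]
    nlinarith [pow_nonneg hv 3]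
  rw [mul_rpow hz.le (by positivity), rpow_def_of_pos (by positivity : 0 < 1 + v), mul_assoc,
    mul_left_comm, ← exp_add, ← exp_add]
  exact mul_le_mul_of_nonneg_left (exp_le_exp.2 (by nlinarith)) (by positivity)

theorem le_Gamma_add_one {z : ℝ} (hz : 0 < z) :
    exp (-1 / 2) * √z * (z ^ z * exp (-z)) ≤ Real.Gamma (z + 1) := by
  have hint : IntegrableOn (fun t : ℝ => t ^ z * exp (-t)) (Set.Ioi 0) := by
    simpa [mul_comm] using GammaIntegral_convergent (by linarith : 0 < z + 1)
  have hsub : Set.Icc z (z + √z) ⊆ Set.Ioi 0 := fun t ht => hz.trans_le ht.1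
  calc exp (-1 / 2) * √z * (z ^ z * exp (-z))
      = exp (-1 / 2) * (z ^ z * exp (-z)) * volume.real (Set.Icc z (z + √z)) := by
        rw [Real.volume_real_Icc_of_le (by simp), add_sub_cancel_left]
        ring
    _ ≤ ∫ t in Set.Icc z (z + √z), t ^ z * exp (-t) :=
        setIntegral_ge_of_const_le_real measurableSet_Icc (by simp)
          (fun t ht => le_rpow_mul_exp_neg hz ht) (hint.mono_set hsub)
    _ ≤ ∫ t in Set.Ioi 0, t ^ z * exp (-t) := by
        refine setIntegral_mono_set hint ?_ hsub.eventuallyLE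
        filter_upwards [self_mem_ae_restrict measurableSet_Ioi] with t ht
        exact mul_nonneg (rpow_nonneg (Set.mem_Ioi.1 ht).le z) (exp_pos _).le
    _ = Real.Gamma (z + 1) := by
        simp [Real.Gamma_eq_integral (by linarith : 0 < z + 1), mul_comm]

theorem Gamma_add_le {x a : ℝ} (hx : 1 ≤ x) (ha : 0 ≤ a) :
    Real.Gamma (x + a) ≤ 2 * √π * exp ((a - 1 / 2) ^ 2) * (x ^ (x + a - 1 / 2) * exp (-x)) := by
  set c := a - 1 / 2 with hc
  have hxc : 0 < x + c := by linarith
  have hx0 : 0 < x := by linarith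
  have hpow : (x + c) ^ (x + c) ≤ x ^ (x + c) * exp (c + c ^ 2) := by
    have hlog : (x + c) * (log (x + c) - log x) ≤ c + c ^ 2 := by
      rw [← log_div hxc.ne' hx0.ne']
      calc (x + c) * log ((x + c) / x) ≤ (x + c) * ((x + c) / x - 1) := by
            gcongr
            exact log_le_sub_one_of_pos (by positivity)
        _ = c + c ^ 2 / x := by field_simp; ring
        _ ≤ c + c ^ 2 := by gcongr; exact div_le_self (sq_nonneg c) hx
    rw [rpow_def_of_pos hxc, rpow_def_of_pos hx0, ← exp_add, exp_le_exp]
    linarith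
  calc Real.Gamma (x + a) = Real.Gamma (x + c + 1 / 2) := by rw [hc]; ring_nf
    _ ≤ 2 * √π * ((x + c) ^ (x + c) * exp (-(x + c))) := Gamma_add_half_le hxc
    _ ≤ 2 * √π * (x ^ (x + c) * exp (c + c ^ 2) * exp (-(x + c))) := by gcongr
    _ = 2 * √π * exp (c ^ 2) * (x ^ (x + a - 1 / 2) * exp (-x)) := by
        rw [mul_assoc (x ^ (x + c)), ← exp_add, show c + c ^ 2 + -(x + c) = c ^ 2 + -x by ring,
          exp_add, show x + a - 1 / 2 = x + c by rw [hc]; ring]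
        ring

section Simplex

variable {ι : Type*} [Fintype ι] {p q : ι → ℝ} {b : ℝ}

theorem sq_sub_div_four_le {s x : ℝ} (hs : s ∈ Set.Icc (0 : ℝ) 1) (hx : x ∈ Set.Icc (0 : ℝ) 1) :
    (x - s) ^ 2 / 4 ≤ (√x - √s) ^ 2 := by
  have hfactor : (x - s) ^ 2 = (√x - √s) ^ 2 * (√x + √s) ^ 2 := by
    rw [← mul_pow, mul_comm, ← sq_sub_sq, sq_sqrt hx.1, sq_sqrt hs.1]
  have hsum : (√x + √s) ^ 2 ≤ 2 ^ 2 := by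
    gcongr
    linarith [sqrt_le_one.2 hx.2, sqrt_le_one.2 hs.2]
  nlinarith [sq_nonneg (√x - √s)]

theorem prod_rpow_le_mul_exp (hp : p ∈ stdSimplex ℝ ι) (hq : q ∈ stdSimplex ℝ ι) :
    ∏ i, q i ^ p i ≤ (∏ i, p i ^ p i) * exp (-(∑ i, (q i - p i) ^ 2) / 4) := by
  have hfactor (i : ι) :
      q i ^ p i ≤ p i ^ p i * exp (q i - p i - (q i - p i) ^ 2 / 4) := by
    have hmul := mul_le_mul_of_nonneg_right (rpow_mul_exp_neg_le (hp.1 i) (hq.1 i))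
      (exp_pos (q i)).le
    have hsq := sq_sub_div_four_le (mem_Icc_of_mem_stdSimplex hp i) (mem_Icc_of_mem_stdSimplex hq i)
    rw [mul_assoc, ← exp_add, neg_add_cancel, exp_zero, mul_one, mul_assoc, mul_assoc, ← exp_add,
      ← exp_add] at hmul
    refine hmul.trans (mul_le_mul_of_nonneg_left (exp_le_exp.2 ?_) (rpow_nonneg (hp.1 i) _))
    linarith
  refine (Finset.prod_le_prod (fun i _ => rpow_nonneg (hq.1 i) _) fun i _ => hfactor i).trans_eq ?_
  rw [Finset.prod_mul_distrib, ← exp_sum, Finset.sum_sub_distrib, Finset.sum_sub_distrib, hp.2,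
    hq.2, ← Finset.sum_div]
  ring_nf

theorem prod_rpow_div_le_mul_exp (hp : p ∈ stdSimplex ℝ ι) (hq : q ∈ stdSimplex ℝ ι) (hb : 0 < b) :
    ∏ i, q i ^ (p i / b) ≤
      (∏ i, p i ^ (p i / b)) * exp (-(∑ i, (q i - p i) ^ 2) / (4 * b)) := by
  have hpow {r : ι → ℝ} (hr : r ∈ stdSimplex ℝ ι) :
      ∏ i, r i ^ (p i / b) = (∏ i, r i ^ p i) ^ b⁻¹ := by
    rw [← finsetProd_rpow _ _ fun i _ => rpow_nonneg (hr.1 i) _]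
    exact Finset.prod_congr rfl fun i _ => by rw [← rpow_mul (hr.1 i), div_eq_mul_inv]
  have hprod {r : ι → ℝ} (hr : r ∈ stdSimplex ℝ ι) : 0 ≤ ∏ i, r i ^ p i :=
    Finset.prod_nonneg fun i _ => rpow_nonneg (hr.1 i) _
  rw [hpow hp, hpow hq, show -(∑ i, (q i - p i) ^ 2) / (4 * b) =
    -(∑ i, (q i - p i) ^ 2) / 4 * b⁻¹ by field_simp, exp_mul, ← mul_rpow (hprod hp) (exp_pos _).le]
  exact rpow_le_rpow (hprod hq) (prod_rpow_le_mul_exp hp hq) (inv_nonneg.2 hb.le)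

theorem rpow_div_Gamma_le {p : ℝ} (hp : 0 < p) (hb : 0 < b) :
    p ^ (p / b) / Real.Gamma (p / b + 1) ≤ exp (1 / 2) * (√b / √p) * (exp 1 * b) ^ (p / b) := by
  have hz : 0 < p / b := by positivity
  rw [div_le_iff₀ (Gamma_pos_of_pos (by positivity))]
  calc p ^ (p / b) = exp (1 / 2) * (√b / √p) * (exp 1 * b) ^ (p / b) *
        (exp (-1 / 2) * √(p / b) * ((p / b) ^ (p / b) * exp (-(p / b)))) := by
        rw [mul_rpow (exp_pos 1).le hb.le, div_rpow hp.le hb.le, sqrt_div hp.le, ← exp_mul, one_mul,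
          neg_div, exp_neg, exp_neg]
        field_simp
    _ ≤ _ := by
        gcongr
        exact le_Gamma_add_one hz

theorem rpow_div_Gamma_nonneg {p : ℝ} (hp : 0 ≤ p) (hb : 0 ≤ b) :
    0 ≤ p ^ (p / b) / Real.Gamma (p / b + 1) :=
  div_nonneg (rpow_nonneg hp _) (Gamma_nonneg_of_nonneg (by positivity))

theorem prod_rpow_div_Gamma_le (hp : ∀ i, 0 < p i) (hsum : ∑ i, p i = 1) (hb : 0 < b) :
    ∏ i, (p i ^ (p i / b) / Real.Gamma (p i / b + 1)) ≤
      exp (1 / 2) ^ Fintype.card ι / (∏ i, √(p i)) * √b ^ Fintype.card ι * (exp 1 * b) ^ (1 / b) :=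
  calc ∏ i, (p i ^ (p i / b) / Real.Gamma (p i / b + 1))
      ≤ ∏ i, (exp (1 / 2) * (√b / √(p i)) * (exp 1 * b) ^ (p i / b)) :=
        Finset.prod_le_prod (fun i _ => rpow_div_Gamma_nonneg (hp i).le hb.le)
          fun i _ => rpow_div_Gamma_le (hp i) hb
    _ = _ := by
        rw [Finset.prod_mul_distrib, Finset.prod_mul_distrib, Finset.prod_div_distrib,
          ← rpow_sum_of_pos (by positivity), ← Finset.sum_div, hsum]
        simp only [Finset.prod_const, Finset.card_univ]
        ring

theorem Gamma_mul_prod_rpow_div_Gamma_le (hp : ∀ i, 0 < p i) (hsum : ∑ i, p i = 1) (hb : 0 < b)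
    (hb1 : b ≤ 1) :
    Real.Gamma (1 / b + Fintype.card ι) * ∏ i, (p i ^ (p i / b) / Real.Gamma (p i / b + 1)) ≤
      2 * √π * exp ((Fintype.card ι - 1 / 2) ^ 2) * (exp (1 / 2) ^ Fintype.card ι / ∏ i, √(p i)) *
        b ^ ((1 - Fintype.card ι : ℝ) / 2) := by
  set k := Fintype.card ι
  have hGamma : Real.Gamma (1 / b + k) ≤ 2 * √π * exp ((k - 1 / 2) ^ 2) *
      ((1 / b) ^ (1 / b + k - 1 / 2) * exp (-(1 / b))) :=
    Gamma_add_le (by rwa [one_le_div hb]) (Nat.cast_nonneg k)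
  have hprod_nonneg : 0 ≤ ∏ i, (p i ^ (p i / b) / Real.Gamma (p i / b + 1)) :=
    Finset.prod_nonneg fun i _ => rpow_div_Gamma_nonneg (hp i).le hb.le
  have hb_pow : (1 / b) ^ (1 / b + k - 1 / 2) * exp (-(1 / b)) * (√b ^ k * (exp 1 * b) ^ (1 / b)) =
      b ^ ((1 - k : ℝ) / 2) := by
    rw [mul_rpow (exp_pos 1).le hb.le, ← exp_mul, one_mul, exp_neg, one_div, inv_rpow hb.le,
      ← rpow_neg hb.le, sqrt_eq_rpow, ← rpow_natCast, ← rpow_mul hb.le]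
    field_simp
    rw [← rpow_add hb, ← rpow_add hb]
    congr 1
    field_simp
    ring
  calc _ ≤ 2 * √π * exp ((k - 1 / 2) ^ 2) * ((1 / b) ^ (1 / b + k - 1 / 2) * exp (-(1 / b))) *
        (exp (1 / 2) ^ k / (∏ i, √(p i)) * √b ^ k * (exp 1 * b) ^ (1 / b)) :=
        mul_le_mul hGamma (prod_rpow_div_Gamma_le hp hsum hb) hprod_nonneg (by positivity)
    _ = _ := by rw [← hb_pow]; ring

end Simplex

section Gaussian

variable {ι : Type*} [Fintype ι] {b : ℝ}

theorem integrable_exp_neg_mul_sum_sub_sq (hb : 0 < b) (s : ι → ℝ) :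
    Integrable fun x : ι → ℝ => exp (-b * ∑ i, (x i - s i) ^ 2) := by
  simp_rw [Finset.mul_sum, exp_sum]
  exact Integrable.fintype_prod (f := fun i v => exp (-b * (v - s i) ^ 2)) fun i =>
    (integrable_exp_neg_mul_sq hb).comp_sub_right (s i)

theorem integral_exp_neg_mul_sum_sub_sq (b : ℝ) (s : ι → ℝ) :
    ∫ x : ι → ℝ, exp (-b * ∑ i, (x i - s i) ^ 2) = √(π / b) ^ Fintype.card ι := by
  refine (integral_sub_right_eq_self (fun x : ι → ℝ => exp (-b * ∑ i, x i ^ 2)) s).trans ?_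
  simp_rw [Finset.mul_sum, exp_sum]
  rw [integral_fintype_prod_volume_eq_pow fun v : ℝ => exp (-b * v ^ 2), integral_gaussian]

end Gaussian

section DirichletKernel

variable {d : ℕ} {s x : Fin d → ℝ} {b : ℝ}

/-- The barycentric coordinates `(1 - ∑ sᵢ, s₁, …, s_d)` of a point of the simplex `Sd d`: they
identify `Sd d` with Mathlib's `stdSimplex` and make the `d + 1` factors of the Dirichlet kernel
uniform. The coordinate of the vertex `0` is put first. -/
noncomputable def baryCoords (s : Fin d → ℝ) : Fin (d + 1) → ℝ :=
  Fin.cons (1 - ∑ i, s i) s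

@[simp]
theorem baryCoords_zero (s : Fin d → ℝ) : baryCoords s 0 = 1 - ∑ i, s i := rfl

@[simp]
theorem baryCoords_succ (s : Fin d → ℝ) (i : Fin d) : baryCoords s i.succ = s i := rfl

theorem sum_baryCoords (s : Fin d → ℝ) : ∑ i, baryCoords s i = 1 := by
  simp [Fin.sum_univ_succ]

theorem baryCoords_mem_stdSimplex (hs : s ∈ Sd d) : baryCoords s ∈ stdSimplex ℝ (Fin (d + 1)) := by
  refine ⟨Fin.cases ?_ fun i => (hs.1 i).1, sum_baryCoords s⟩
  exact sub_nonneg.2 ((Finset.sum_le_sum fun i _ => le_abs_self (s i)).trans hs.2)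

theorem baryCoords_pos (hs : s ∈ SdInt d) : ∀ i, 0 < baryCoords s i :=
  Fin.cases (sub_pos.2 ((Finset.sum_le_sum fun i _ => le_abs_self (s i)).trans_lt hs.2))
    fun i => (hs.1 i).1

theorem SdInt_subset_Sd : SdInt d ⊆ Sd d :=
  fun _ hs => ⟨fun i => Set.Ioo_subset_Icc_self (hs.1 i), hs.2.le⟩

theorem isClosed_Sd : IsClosed (Sd d) := by
  simp only [Sd, Set.ofPred_and, Set.ofPred_forall]
  exact .inter (isClosed_iInter fun i => isClosed_Icc.preimage (continuous_apply i))
    (isClosed_le (by fun_prop) continuous_const)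

theorem measurable_kappa (s : Fin d → ℝ) (b : ℝ) : Measurable (kappa d s b) := by
  unfold kappa dirK
  fun_prop

theorem kappa_eq (s x : Fin d → ℝ) (b : ℝ) :
    kappa d s b x = Real.Gamma (1 / b + (d + 1)) / (∏ i, Real.Gamma (baryCoords s i / b + 1)) *
      ∏ i, baryCoords x i ^ (baryCoords s i / b) := by
  have hsum : ∑ i, (s i / b + 1) + ((1 - ∑ i, s i) / b + 1) = 1 / b + (d + 1) := by
    rw [Finset.sum_add_distrib, ← Finset.sum_div, Finset.sum_const, Finset.card_univ,
      Fintype.card_fin, nsmul_one]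
    ring
  simp only [kappa, dirK, hsum, Fin.prod_univ_succ, baryCoords_zero, baryCoords_succ,
    add_sub_cancel_right]
  ring

theorem kappa_coeff_nonneg (hs : s ∈ Sd d) (hb : 0 < b) :
    0 ≤ Real.Gamma (1 / b + (d + 1)) / ∏ i, Real.Gamma (baryCoords s i / b + 1) :=
  div_nonneg (Gamma_nonneg_of_nonneg (by positivity)) <| Finset.prod_nonneg fun i _ =>
    Gamma_nonneg_of_nonneg (by have := (baryCoords_mem_stdSimplex hs).1 i; positivity)

theorem kappa_nonneg (hs : s ∈ Sd d) (hx : x ∈ Sd d) (hb : 0 < b) : 0 ≤ kappa d s b x := by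
  rw [kappa_eq]
  exact mul_nonneg (kappa_coeff_nonneg hs hb) <|
    Finset.prod_nonneg fun i _ => rpow_nonneg ((baryCoords_mem_stdSimplex hx).1 i) _

theorem kappa_le_kappa_self_mul_exp (hs : s ∈ Sd d) (hx : x ∈ Sd d) (hb : 0 < b) :
    kappa d s b x ≤ kappa d s b s * exp (-(∑ i, (x i - s i) ^ 2) / (4 * b)) := by
  have hdrop : ∑ i, (x i - s i) ^ 2 ≤ ∑ i, (baryCoords x i - baryCoords s i) ^ 2 := by
    rw [Fin.sum_univ_succ]
    exact le_add_of_nonneg_left (sq_nonneg _)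
  have hs_bary := baryCoords_mem_stdSimplex hs
  have hprod : 0 ≤ ∏ i, baryCoords s i ^ (baryCoords s i / b) :=
    Finset.prod_nonneg fun i _ => rpow_nonneg (hs_bary.1 i) _
  rw [kappa_eq, kappa_eq, mul_assoc]
  refine mul_le_mul_of_nonneg_left ?_ (kappa_coeff_nonneg hs hb)
  refine (prod_rpow_div_le_mul_exp hs_bary (baryCoords_mem_stdSimplex hx) hb).trans ?_
  gcongr

theorem kappa_self_isBigO (hs : s ∈ SdInt d) :
    (fun b => kappa d s b s) =O[𝓝[>] 0] fun b : ℝ => b ^ (-(d : ℝ) / 2) := by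
  refine IsBigO.of_bound (2 * √π * exp (((d + 1 : ℕ) - 1 / 2) ^ 2) *
    (exp (1 / 2) ^ (d + 1) / ∏ i, √(baryCoords s i))) ?_
  filter_upwards [Ioc_mem_nhdsGT one_pos] with b ⟨hb, hb1⟩
  have hle := Gamma_mul_prod_rpow_div_Gamma_le (baryCoords_pos hs) (sum_baryCoords s) hb hb1
  rw [Fintype.card_fin, Finset.prod_div_distrib, mul_div_left_comm, mul_comm] at hle
  rw [norm_of_nonneg (kappa_nonneg (SdInt_subset_Sd hs) (SdInt_subset_Sd hs) hb),
    norm_of_nonneg (rpow_nonneg hb.le _), kappa_eq]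
  convert hle using 2 <;> push_cast <;> ring_nf

theorem integral_kappa_sq_le {μ : Measure (Fin d → ℝ)} {M : NNReal} (hμ : μ ≤ M • volume)
    (hμs : ∀ᵐ x ∂μ, x ∈ Sd d) (hs : s ∈ Sd d) (hb : 0 < b) :
    ∫ x, kappa d s b x ^ 2 ∂μ ≤ M * √(2 * π * b) ^ d * kappa d s b s ^ 2 := by
  set g : (Fin d → ℝ) → ℝ := fun x => exp (-(1 / (2 * b)) * ∑ i, (x i - s i) ^ 2)
  have hg_int : Integrable g (M • volume) :=
    (integrable_exp_neg_mul_sum_sub_sq (by positivity) s).smul_measure_nnreal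
  have hpt : ∀ᵐ x ∂μ, kappa d s b x ^ 2 ≤ kappa d s b s ^ 2 * g x := by
    filter_upwards [hμs] with x hx
    refine (pow_le_pow_left₀ (kappa_nonneg hs hx hb)
      (kappa_le_kappa_self_mul_exp hs hx hb) 2).trans_eq ?_
    rw [mul_pow, ← exp_nat_mul]
    congr 2
    field_simp
    ring
  calc ∫ x, kappa d s b x ^ 2 ∂μ ≤ ∫ x, kappa d s b s ^ 2 * g x ∂μ :=
        integral_mono_of_nonneg (ae_of_all _ fun _ => sq_nonneg _)
          ((hg_int.mono_measure hμ).const_mul _) hpt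
    _ = kappa d s b s ^ 2 * ∫ x, g x ∂μ := integral_const_mul _ _
    _ ≤ kappa d s b s ^ 2 * ∫ x, g x ∂(M • volume) := by
        refine mul_le_mul_of_nonneg_left ?_ (sq_nonneg _)
        exact integral_mono_measure hμ (ae_of_all _ fun _ => (exp_pos _).le) hg_int
    _ = M * √(2 * π * b) ^ d * kappa d s b s ^ 2 := by
        rw [integral_smul_nnreal_measure, integral_exp_neg_mul_sum_sub_sq, Fintype.card_fin,
          show π / (1 / (2 * b)) = 2 * π * b by field_simp, NNReal.smul_def, smul_eq_mul]
        ring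

theorem integral_kappa_sq_isBigO {μ : Measure (Fin d → ℝ)} {M : NNReal} (hμ : μ ≤ M • volume)
    (hμs : ∀ᵐ x ∂μ, x ∈ Sd d) (hs : s ∈ SdInt d) :
    (fun b => ∫ x, kappa d s b x ^ 2 ∂μ) =O[𝓝[>] 0] fun b : ℝ => b ^ (-(d : ℝ) / 2) := by
  have hpow : (fun b : ℝ => M * √(2 * π * b) ^ d * (b ^ (-(d : ℝ) / 2)) ^ 2) =O[𝓝[>] 0]
      fun b : ℝ => b ^ (-(d : ℝ) / 2) := by
    refine (isBigO_const_mul_self (M * √(2 * π) ^ d) _ _).congr' ?_ .rfl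
    filter_upwards [self_mem_nhdsWithin] with b (hb : 0 < b)
    rw [sqrt_mul (by positivity : 0 ≤ 2 * π) b, mul_pow √(2 * π), sqrt_eq_rpow b,
      ← rpow_natCast (b ^ _) d, ← rpow_mul hb.le, sq, mul_assoc, mul_assoc, mul_assoc,
      ← rpow_add hb, ← rpow_add hb]
    ring_nf
  refine IsBigO.trans (IsBigO.of_bound 1 ?_)
    (((isBigO_refl _ _).mul ((kappa_self_isBigO hs).pow 2)).trans hpow)
  filter_upwards [self_mem_nhdsWithin] with b (hb : 0 < b)
  rw [one_mul, norm_of_nonneg (by positivity), norm_of_nonneg (by positivity)]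
  exact integral_kappa_sq_le hμ hμs (SdInt_subset_Sd hs) hb

end DirichletKernel

/-- Variance bound: `Var{κ_{s,b}(X)} ≤ E{κ_{s,b}²(X)} ≪_s b^{-d/2}`. -/
theorem dirichlet_kernel_variance_bound {Ω : Type*} [MeasurableSpace Ω]
    (P : Measure Ω) [IsProbabilityMeasure P] (d : ℕ) (hd : 1 ≤ d)
    (X : Ω → (Fin d → ℝ)) (hmeas : Measurable X) (hval : ∀ ω, X ω ∈ Sd d)
    (f : (Fin d → ℝ) → ℝ)
    (hlaw : Measure.map X P = volume.withDensity fun x => ENNReal.ofReal (f x))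
    (hsupp : ∀ x, x ∉ Sd d → f x = 0)
    (hbdd : ∃ M : ℝ, ∀ x, |f x| ≤ M)
    (s : Fin d → ℝ) (hs : s ∈ SdInt d) :
    (∀ b : ℝ, 0 < b →
      (∫ ω, (kappa d s b (X ω)) ^ 2 ∂P) - (∫ ω, kappa d s b (X ω) ∂P) ^ 2 ≤
        ∫ ω, (kappa d s b (X ω)) ^ 2 ∂P) ∧
    (fun b : ℝ => ∫ ω, (kappa d s b (X ω)) ^ 2 ∂P)
      =O[𝓝[>] (0 : ℝ)] (fun b : ℝ => b ^ (-(d : ℝ) / 2)) := by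
  obtain ⟨M, hM⟩ := hbdd
  have hle : P.map X ≤ M.toNNReal • volume := by
    rw [hlaw, ← Measure.coe_nnreal_smul, ← withDensity_const]
    exact withDensity_mono <| ae_of_all _ fun x =>
      ENNReal.ofReal_le_ofReal ((le_abs_self _).trans (hM x))
  have hmem : ∀ᵐ x ∂P.map X, x ∈ Sd d :=
    (ae_map_iff hmeas.aemeasurable isClosed_Sd.measurableSet).2 (ae_of_all _ hval)
  refine ⟨fun b _ => sub_le_self _ (sq_nonneg _), ?_⟩
  refine (integral_kappa_sq_isBigO hle hmem hs).congr_left fun b => ?_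
  exact integral_map hmeas.aemeasurable ((measurable_kappa s b).pow_const 2).aestronglyMeasurable
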